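/- Let n ≥ 2 and let Σ be a nonempty family of hyperplanes of PG(2n+1,q) satisfying properties (P1^+) and (P2). Then every subspace of codimension 2 of PG(2n+1,q) contains exactly c₁, c₂, c₃ or c₄ black points, where c₁ = (q^n+1)(q^{n−1}−1)/(q−1), c₂ = 1 + q(q^{2n−2}−1)/(q−1), c₃ = (q^n−1)(q^{n−1}+1)/(q−1), and c₄ = 1 + q + q²(q^{n−1}−1)(q^{n−2}+1)/(q−1). -/

import Mathlib

open Classical in
theorem aux_card {F : Type} [Field F] [Fintype F] {k : ℕ} (U : Submodule F (Fin k → F)) :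
    ((Finset.univ : Finset (Fin k → F)).filter (· ∈ U)).card
      = Fintype.card F ^ Module.finrank F U := by
  rw [← Module.card_eq_pow_finrank (K := F) (V := U), Fintype.card_subtype]

theorem aux_inf {F : Type} [Field F] {k : ℕ} (A B : Submodule F (Fin (k+1) → F))
    (hA : Module.finrank F A = k) (h : ¬ B ≤ A) :
    Module.finrank F (A ⊓ B : Submodule F (Fin (k+1) → F)) + 1 = Module.finrank F B := by
  have h1 := Submodule.finrank_sup_add_finrank_inf_eq A B
  have h2 : A < A ⊔ B := left_lt_sup.2 h
  have h3 := Submodule.finrank_lt_finrank_of_lt h2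
  have h4 := Submodule.finrank_le (A ⊔ B)
  rw [Module.finrank_fin_fun] at h4
  omega

open Classical in
theorem aux_points {F : Type} [Field F] [Fintype F] {k : ℕ}
    (P : Submodule F (Fin k → F) → Prop) :
    ((Finset.univ : Finset (Fin k → F)).filter (fun v => v ≠ 0 ∧ P (F ∙ v))).card
      = {p : Submodule F (Fin k → F) | Module.finrank F p = 1 ∧ P p}.ncard
        * (Fintype.card F - 1) := by
  have hfin : {p : Submodule F (Fin k → F) | Module.finrank F p = 1 ∧ P p}.Finite :=
    Set.toFinite _
  rw [Set.ncard_eq_toFinset_card _ hfin]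
  rw [Finset.card_eq_sum_card_fiberwise (f := fun v => (F ∙ v)) (t := hfin.toFinset)]
  · apply Finset.sum_const_nat
    intro p hp
    simp only [Set.Finite.mem_toFinset, Set.mem_ofPred_eq] at hp
    obtain ⟨hp1, hp2⟩ := hp
    have : ((Finset.univ : Finset (Fin k → F)).filter (fun v => v ≠ 0 ∧ P (F ∙ v))).filter
        (fun v => (F ∙ v) = p) = ((Finset.univ : Finset (Fin k → F)).filter (· ∈ p)).erase 0 := by
      ext v
      simp only [Finset.mem_filter, Finset.mem_univ, true_and, Finset.mem_erase]
      constructor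
      · rintro ⟨⟨h0, _⟩, h⟩
        exact ⟨h0, h ▸ Submodule.mem_span_singleton_self v⟩
      · rintro ⟨h0, h⟩
        have : (F ∙ v) = p := by
          apply Submodule.eq_of_le_of_finrank_eq
          · simpa using h
          · rw [finrank_span_singleton h0, hp1]
        exact ⟨⟨h0, this ▸ hp2⟩, this⟩
    rw [this, Finset.card_erase_of_mem (by simp), aux_card, hp1, pow_one]
  · intro v hv
    simp only [Finset.coe_filter, Finset.mem_univ, true_and, Set.mem_ofPred_eq] at hv
    simp only [Set.Finite.coe_toFinset, Set.mem_ofPred_eq]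
    exact ⟨finrank_span_singleton hv.1, hv.2⟩

open Classical in
/-- Double counting of incident pairs (vector of `W`, member of `T`). -/
theorem aux_sum {F : Type} [Field F] [Fintype F] {k : ℕ}
    (T : Finset (Submodule F (Fin (k+1) → F))) (hT : ∀ π ∈ T, Module.finrank F π = k)
    (W : Submodule F (Fin (k+1) → F)) (d : ℕ) (hW : Module.finrank F W = d + 1) :
    (∑ v ∈ Finset.univ.filter (· ∈ W), ((T.filter (fun π => v ∈ π)).card : ℤ))
      = (T.filter (fun π => W ≤ π)).card * (Fintype.card F : ℤ) ^ (d+1)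
        + ((T.card : ℤ) - (T.filter (fun π => W ≤ π)).card) * (Fintype.card F : ℤ) ^ d := by
  have h1 : ∀ π ∈ T, (((Finset.univ.filter (· ∈ W)).filter (fun v => v ∈ π)).card : ℤ)
      = if W ≤ π then (Fintype.card F : ℤ) ^ (d+1) else (Fintype.card F : ℤ) ^ d := by
    intro π hπ
    have : (Finset.univ.filter (· ∈ W)).filter (fun v => v ∈ π)
        = Finset.univ.filter (· ∈ (π ⊓ W : Submodule F (Fin (k+1) → F))) := by
      ext v; simp [and_comm]
    rw [this, aux_card]
    split_ifs with h
    · rw [inf_eq_right.2 h, hW]; push_cast; rfl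
    · have := aux_inf π W (hT π hπ) h
      have : Module.finrank F (π ⊓ W : Submodule F (Fin (k+1) → F)) = d := by omega
      rw [this]; push_cast; rfl
  have h2 : (∑ v ∈ Finset.univ.filter (· ∈ W), ((T.filter (fun π => v ∈ π)).card : ℤ))
      = ∑ π ∈ T, (((Finset.univ.filter (· ∈ W)).filter (fun v => v ∈ π)).card : ℤ) := by
    have := Finset.sum_card_bipartiteAbove_eq_sum_card_bipartiteBelow
      (s := Finset.univ.filter (· ∈ W)) (t := T) (fun v π => v ∈ π)
    unfold Finset.bipartiteAbove Finset.bipartiteBelow at this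
    exact_mod_cast this
  rw [h2, Finset.sum_congr rfl h1, Finset.sum_ite, Finset.sum_const, Finset.sum_const]
  have h3 := Finset.card_filter_add_card_filter_not (s := T) (fun π => W ≤ π)
  rw [nsmul_eq_mul, nsmul_eq_mul, ← h3]
  push_cast
  ring

open Classical in
theorem aux_sumsq {F : Type} [Field F] [Fintype F] {k : ℕ}
    (T : Finset (Submodule F (Fin (k+2) → F))) (hT : ∀ π ∈ T, Module.finrank F π = k+1) :
    (∑ v : Fin (k+2) → F, ((T.filter (fun π => v ∈ π)).card : ℤ)^2)
      = T.card * (Fintype.card F : ℤ) ^ (k+1)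
        + (T.card : ℤ) * (T.card - 1) * (Fintype.card F : ℤ) ^ k := by
  have h1 : ∀ v : Fin (k+2) → F, ((T.filter (fun π => v ∈ π)).card : ℤ)^2
      = ∑ π ∈ T, if v ∈ π then ((T.filter (fun π => v ∈ π)).card : ℤ) else 0 := by
    intro v
    rw [← Finset.sum_filter, Finset.sum_const, nsmul_eq_mul, sq]
  rw [Finset.sum_congr rfl (fun v _ => h1 v), Finset.sum_comm]
  have h2 : ∀ π ∈ T, (∑ v : Fin (k+2) → F,
      if v ∈ π then ((T.filter (fun π => v ∈ π)).card : ℤ) else 0)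
      = (Fintype.card F : ℤ) ^ (k+1) + ((T.card : ℤ) - 1) * (Fintype.card F : ℤ) ^ k := by
    intro π hπ
    rw [← Finset.sum_filter, aux_sum T hT π k (hT π hπ)]
    have : T.filter (fun σ => π ≤ σ) = {π} := by
      ext σ
      simp only [Finset.mem_filter, Finset.mem_singleton]
      constructor
      · rintro ⟨h, h'⟩
        exact (Submodule.eq_of_le_of_finrank_eq h' (by rw [hT π hπ, hT σ h])).symm
      · rintro rfl; exact ⟨hπ, le_rfl⟩
    rw [this]; simp
  rw [Finset.sum_congr rfl h2, Finset.sum_const, nsmul_eq_mul]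
  ring

open Classical in
theorem aux_pencil {F : Type} [Field F] [Fintype F] {k : ℕ}
    (T : Finset (Submodule F (Fin (k+2) → F))) (hT : ∀ π ∈ T, Module.finrank F π = k+1)
    (W : Submodule F (Fin (k+2) → F)) (hW : Module.finrank F W = k) :
    (T.filter (fun π => W ≤ π)).card ≤ Fintype.card F + 1 := by
  set q := Fintype.card F with hq
  have hq2 : 1 < q := Fintype.one_lt_card
  set A := T.filter (fun π => W ≤ π) with hA
  let f : Submodule F (Fin (k+2) → F) → Finset (Fin (k+2) → F) :=
    fun π => Finset.univ.filter (· ∈ π) \ Finset.univ.filter (· ∈ W)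
  have hdisj : ∀ π ∈ A, ∀ σ ∈ A, π ≠ σ → Disjoint (f π) (f σ) := by
    intro π hπ σ hσ hne
    rw [hA, Finset.mem_filter] at hπ hσ
    rw [Finset.disjoint_left]
    intro v hv hv'
    simp only [f, Finset.mem_sdiff, Finset.mem_filter, Finset.mem_univ, true_and] at hv hv'
    have h1 : ¬ σ ≤ π := fun h => hne
      (Submodule.eq_of_le_of_finrank_eq h (by rw [hT π hπ.1, hT σ hσ.1])).symm
    have h2 := aux_inf π σ (hT π hπ.1) h1
    rw [hT σ hσ.1] at h2
    have h3 : W = π ⊓ σ :=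
      Submodule.eq_of_le_of_finrank_eq (le_inf hπ.2 hσ.2)
      (by rw [hW]; exact (Nat.succ.inj h2).symm)
    exact hv.2 (h3 ▸ ⟨hv.1, hv'.1⟩)
  have hcard : ∀ π ∈ A, (f π).card = q ^ (k+1) - q ^ k := by
    intro π hπ
    rw [hA, Finset.mem_filter] at hπ
    rw [Finset.card_sdiff_of_subset, aux_card, aux_card, hT π hπ.1, hW]
    intro v hv
    simp only [Finset.mem_filter, Finset.mem_univ, true_and] at hv ⊢
    exact hπ.2 hv
  have h1 : (A.biUnion f).card = A.card * (q ^ (k+1) - q ^ k) := by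
    rw [Finset.card_biUnion hdisj, Finset.sum_const_nat hcard]
  have h2 : A.biUnion f ⊆ Finset.univ \ Finset.univ.filter (· ∈ W) := by
    intro v hv
    simp only [f, Finset.mem_biUnion, Finset.mem_sdiff] at hv ⊢
    obtain ⟨π, _, _, h⟩ := hv
    exact ⟨Finset.mem_univ _, h⟩
  have h3 := Finset.card_le_card h2
  rw [h1, Finset.card_sdiff_of_subset (Finset.subset_univ _), aux_card, hW, Finset.card_univ,
    Fintype.card_fun, Fintype.card_fin, ← hq] at h3
  have e1 : q ^ (k+1) - q ^ k = q ^ k * (q - 1) := by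
    rw [pow_succ, Nat.mul_sub, mul_one]
  have e2 : q ^ (k+2) - q ^ k = (q + 1) * (q ^ k * (q - 1)) := by
    obtain ⟨r, hr⟩ : ∃ r, q = r + 1 := ⟨q - 1, by omega⟩
    rw [hr, Nat.add_sub_cancel]
    apply Nat.sub_eq_of_eq_add
    ring
  rw [e1, e2] at h3
  exact Nat.le_of_mul_le_mul_right h3 (Nat.mul_pos (by positivity) (by omega))

theorem aux_arith (N Q q : ℤ) (hq : 2 ≤ q) (hQ : q ≤ Q)
    (h : N * (Q^2*q) + N*(N-1)*Q^2 - (Q*(Q-1)+Q^2)*(N*(Q^2*q)) + Q*(Q-1)*Q^2*(Q^2*q^2)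
      = (N - Q*(Q-1))*(N-Q^2)) : N = Q*(q*Q-1) := by
  have h1 : (N - Q*(q*Q-1)) * ((Q-1) * ((Q+1)*N - Q^2*(Q*q+1))) = 0 := by linear_combination h
  rcases mul_eq_zero.1 h1 with h2 | h2
  · linarith
  · exfalso
    rcases mul_eq_zero.1 h2 with h3 | h3
    · linarith
    · have : (Q+1) ∣ (q - 1) := ⟨Q^2*q - Q*(q-1) + (q-1) - N , by linear_combination h3⟩
      have := Int.le_of_dvd (by linarith) this
      linarith

/-- For `n ≥ 2` and a nonempty family `S` of hyperplanes of `PG(2n+1,q)`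
satisfying (P1⁺) and (P2), every codimension-2 subspace contains exactly
`c₁ = (q^n+1)(q^{n-1}-1)/(q-1)`, `c₂ = 1 + q(q^{2n-2}-1)/(q-1)`,
`c₃ = (q^n-1)(q^{n-1}+1)/(q-1)`, or `c₄ = 1 + q + q²(q^{n-1}-1)(q^{n-2}+1)/(q-1)`
black points. -/
theorem stmt_18 (n : ℕ) (hn : 2 ≤ n)
    (F : Type) [Field F] [Fintype F] (q : ℕ) (hq : Fintype.card F = q)
    (S : Set (Submodule F (Fin (2*n+2) → F)))
    (hS : S.Nonempty)
    (hhyp : ∀ π ∈ S, Module.finrank F π = 2*n+1)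
    (hP1 : ∀ p : Submodule F (Fin (2*n+2) → F), Module.finrank F p = 1 →
      {π ∈ S | p ≤ π}.ncard = q^n * (q^n - 1) ∨ {π ∈ S | p ≤ π}.ncard = q^(2*n))
    (hP2 : ∀ W : Submodule F (Fin (2*n+2) → F), Module.finrank F W = 2*n →
      (∃ π ∈ S, W ≤ π) → q - 1 ≤ {π ∈ S | W ≤ π}.ncard) :
    ∀ W : Submodule F (Fin (2*n+2) → F), Module.finrank F W = 2*n →
      {p : Submodule F (Fin (2*n+2) → F) | Module.finrank F p = 1 ∧
        {σ ∈ S | p ≤ σ}.ncard = q^n * (q^n - 1) ∧ p ≤ W}.ncard ∈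
      ({(q^n + 1) * (q^(n-1) - 1) / (q - 1),
        1 + q * (q^(2*n-2) - 1) / (q - 1),
        (q^n - 1) * (q^(n-1) + 1) / (q - 1),
        1 + q + q^2 * ((q^(n-1) - 1) * (q^(n-2) + 1)) / (q - 1)} : Set ℕ) := by
  classical
  intro W hW
  have hq2 : 2 ≤ q := by rw [← hq]; exact Fintype.one_lt_card
  obtain ⟨T, rfl⟩ : ∃ T : Finset (Submodule F (Fin (2*n+2) → F)), S = ↑T :=
    ⟨(Set.toFinite S).toFinset, by simp⟩
  have hT : ∀ π ∈ T, Module.finrank F π = 2*n+1 := fun π h => hhyp π (by simpa using h)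
  have hset : ∀ U : Submodule F (Fin (2*n+2) → F),
      {π ∈ (T : Set (Submodule F (Fin (2*n+2) → F))) | U ≤ π}.ncard
        = (T.filter (fun π => U ≤ π)).card := by
    intro U
    rw [← Set.ncard_coe_finset]; congr 1; ext π; simp
  simp only [hset] at hP1 hP2 ⊢
  obtain ⟨m, rfl⟩ : ∃ m, n = m + 2 := ⟨n - 2, by omega⟩
  set Q : ℤ := (q:ℤ)^(m+2) with hQdef
  have hQ1 : (q:ℤ) ≤ Q := by
    have : q^1 ≤ q^(m+2) := Nat.pow_le_pow_right (by omega) (by omega)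
    rw [pow_one] at this
    rw [hQdef]; exact_mod_cast this
  have hc1 : ((q^(m+2) * (q^(m+2) - 1) : ℕ) : ℤ) = Q * (Q - 1) := by
    rw [Nat.cast_mul, Nat.cast_sub (Nat.one_le_pow _ _ (by omega))]; push_cast; rfl
  have hc2 : ((q^(2*(m+2)) : ℕ) : ℤ) = Q^2 := by
    push_cast; rw [hQdef]; ring
  -- vector version of (P1)
  set M : (Fin (2*(m+2)+2) → F) → ℤ := fun v => ((T.filter (fun π => v ∈ π)).card : ℤ) with hM
  have hspan : ∀ v : Fin (2*(m+2)+2) → F,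
      (T.filter (fun π => (F ∙ v) ≤ π)) = (T.filter (fun π => v ∈ π)) := by
    intro v; simp
  have hM1 : ∀ v, v ≠ 0 → M v = Q * (Q-1) ∨ M v = Q^2 := by
    intro v hv
    have := hP1 (F ∙ v) (finrank_span_singleton hv)
    rw [hspan] at this
    rw [← hc1, ← hc2, hM]
    beta_reduce
    exact_mod_cast this
  have hM0 : M 0 = T.card := by simp [hM]
  -- size of T
  have hN : (T.card : ℤ) = Q * (q * Q - 1) := by
    apply aux_arith _ _ _ (by exact_mod_cast hq2) hQ1
    have s1 : ∑ v, M v = T.card * (Q^2*q) := by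
      have h := aux_sum T hT ⊤ (2*(m+2)+1) (by rw [finrank_top, Module.finrank_fin_fun])
      have e : T.filter (fun π => ⊤ ≤ π) = ∅ := by
        apply Finset.filter_false_of_mem
        intro π hπ h
        have h1 := hT π hπ
        rw [top_le_iff.1 h, finrank_top, Module.finrank_fin_fun] at h1
        omega
      rw [e, hq] at h
      simp only [Submodule.mem_top, Finset.filter_true, Finset.card_empty] at h
      rw [hM]
      simp only
      rw [h, hQdef]; push_cast; ring
    have s2 : ∑ v, M v ^ 2 = T.card * (Q^2*q) + T.card * (T.card - 1) * Q^2 := by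
      have h := aux_sumsq T hT
      rw [hq] at h
      rw [hM]
      simp only
      rw [h, hQdef]; ring
    have s3 : ∑ v, (M v - Q*(Q-1)) * (M v - Q^2) = (M 0 - Q*(Q-1)) * (M 0 - Q^2) := by
      apply Finset.sum_eq_single_of_mem _ (Finset.mem_univ _)
      intro v _ hv
      rcases hM1 v hv with h | h <;> rw [h] <;> ring
    have s4 : ∑ v, (M v - Q*(Q-1)) * (M v - Q^2)
        = ∑ v, M v ^ 2 - (Q*(Q-1)+Q^2) * ∑ v, M v + Q*(Q-1)*Q^2*(Q^2*q^2) := by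
      have e : ∀ v, (M v - Q*(Q-1)) * (M v - Q^2)
          = M v ^ 2 - (Q*(Q-1)+Q^2) * M v + Q*(Q-1)*Q^2 := fun v => by ring
      rw [Finset.sum_congr rfl (fun v _ => e v), Finset.sum_add_distrib, Finset.sum_sub_distrib,
        ← Finset.mul_sum, Finset.sum_const, Finset.card_univ, Fintype.card_fun, Fintype.card_fin,
        hq, nsmul_eq_mul, hQdef]
      push_cast
      ring
    rw [s4, s1, s2, hM0] at s3
    linear_combination s3
  -- black points
  set x := (T.filter (fun π => W ≤ π)).card with hx
  have hx4 : x = 0 ∨ x = q - 1 ∨ x = q ∨ x = q + 1 := by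
    have h1 : x ≤ q + 1 := by rw [hx, ← hq]; exact aux_pencil T hT W hW
    by_cases h0 : x = 0
    · exact Or.inl h0
    · obtain ⟨π, hπ⟩ := Finset.card_pos.1 (Nat.pos_of_ne_zero h0)
      rw [Finset.mem_filter] at hπ
      have := hP2 W hW ⟨π, by simpa using hπ.1, hπ.2⟩
      omega
  set β := {p : Submodule F (Fin (2*(m+2)+2) → F) | Module.finrank F p = 1 ∧
        (T.filter (fun π => p ≤ π)).card = q^(m+2) * (q^(m+2) - 1) ∧ p ≤ W}.ncard with hβ
  have hB := aux_points (F := F) (k := 2*(m+2)+2)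
    (fun p => (T.filter (fun π => p ≤ π)).card = q^(m+2) * (q^(m+2) - 1) ∧ p ≤ W)
  rw [← hβ, hq] at hB
  set R : ℤ := (q:ℤ)^m with hR
  have hQR : Q = R * q^2 := by rw [hQdef, hR]; ring
  have hmain : (β : ℤ) * (q - 1) = R^2*q^3 + R*q^3 - R*q^2 - 1 - x * (R*q*(q-1)) := by
    have t1 := aux_sum T hT W (2*(m+1)+1) (by rw [hW]; ring)
    rw [hq, ← hx] at t1
    have t2 : ∑ v ∈ Finset.univ.filter (· ∈ W), (Q^2 - M v)
        = (Q^2 - M 0) + ∑ v ∈ Finset.univ.filter (fun v => v ≠ 0 ∧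
          ((T.filter (fun π => (F ∙ v) ≤ π)).card = q^(m+2) * (q^(m+2) - 1) ∧ (F ∙ v) ≤ W)), Q := by
      rw [← Finset.add_sum_erase _ _ (show (0 : Fin (2*(m+2)+2) → F) ∈ Finset.univ.filter (· ∈ W) by simp)]
      congr 1
      symm
      apply Finset.sum_subset_zero_on_sdiff
      · intro v hv
        simp only [Finset.mem_filter, Finset.mem_univ, true_and, Finset.mem_erase,
          Submodule.span_singleton_le_iff_mem] at hv ⊢
        exact ⟨hv.1, hv.2.2⟩
      · intro v hv
        simp only [Finset.mem_sdiff, Finset.mem_filter, Finset.mem_univ, true_and, Finset.mem_erase,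
          Submodule.span_singleton_le_iff_mem] at hv
        rcases hM1 v hv.1.1 with h | h
        · exfalso
          apply hv.2
          refine ⟨hv.1.1, ?_, hv.1.2⟩
          rw [← hc1, hM] at h
          beta_reduce at h
          exact_mod_cast h
        · rw [h]; ring
      · intro v hv
        simp only [Finset.mem_filter, Finset.mem_univ, true_and,
          Submodule.span_singleton_le_iff_mem] at hv
        have h : M v = Q * (Q-1) := by
          rw [← hc1, ← hv.2.1]
        rw [h]; ring
    have hB' : (Finset.univ.filter (fun v : Fin (2*(m+2)+2) → F => v ≠ 0 ∧
          ((T.filter (fun π => (F ∙ v) ≤ π)).card = q^(m+2) * (q^(m+2) - 1) ∧ (F ∙ v) ≤ W))).card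
        = β * (q - 1) := by
      rw [← hB]; congr
    rw [Finset.sum_const, hB', Finset.sum_sub_distrib, Finset.sum_const, aux_card, hW, hq, hM0, hM,
      nsmul_eq_mul, nsmul_eq_mul, t1, hN, Nat.cast_mul, Nat.cast_sub (by omega : 1 ≤ q)] at t2
    push_cast at t2
    have p1 : (q:ℤ)^(2*(m+2)) = R^2*q^4 := by rw [hR]; ring
    have p2 : (q:ℤ)^(2*(m+1)+1) = R^2*q^3 := by rw [hR]; ring
    have p3 : (q:ℤ)^(2*(m+1)+1+1) = R^2*q^4 := by rw [hR]; ring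
    rw [p1, p2, p3] at t2
    have hQ0 : Q ≠ 0 := by
      have : (2:ℤ) ≤ q := by exact_mod_cast hq2
      intro h; linarith
    apply mul_left_cancel₀ hQ0
    rw [hQR] at t2 ⊢
    linear_combination -t2
  obtain ⟨r, rfl⟩ : ∃ r, q = r + 2 := ⟨q - 2, by omega⟩
  clear_value β x
  have hpos : ∀ k, 1 ≤ (r+2)^k := fun k => Nat.one_le_pow _ _ (by omega)
  have key : ∀ A : ℕ, (A : ℤ) = β * ((r + 2 : ℕ) - 1) → A / (r + 2 - 1) = β := by
    intro A hA
    have h : A = β * (r + 1) := by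
      have : (A : ℤ) = ((β * (r+1) : ℕ) : ℤ) := by rw [hA]; push_cast; ring
      exact_mod_cast this
    rw [h]
    exact Nat.mul_div_cancel _ (by omega)
  have hqm1 : (((r + 2 - 1 : ℕ)) : ℤ) = ((r+2 : ℕ) : ℤ) - 1 := by
    push_cast [Nat.cast_sub]; ring
  simp only [Set.mem_insert_iff, Set.mem_singleton_iff]
  have x1 : m + 2 - 1 = m + 1 := by omega
  have x2 : m + 2 - 2 = m := by omega
  have x3 : 2 * (m + 2) - 2 = 2 * m + 2 := by omega
  rw [x1, x2, x3]
  rcases hx4 with h | h | h | h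
  · right; right; right
    have e : 1 + (r+2) + (r+2)^2 * (((r+2)^(m+1) - 1) * ((r+2)^m+1)) / (r+2-1)
        = ((1 + (r+2)) * (r+2-1) + (r+2)^2 * (((r+2)^(m+1) - 1) * ((r+2)^m+1))) / (r+2-1) := by
      rw [add_comm (_ * (r+2-1)), Nat.add_mul_div_right _ _ (by omega), add_comm]
    rw [e]; symm; apply key
    rw [hmain, h, hR]
    push_cast [Nat.cast_sub (hpos (m+1)), hqm1]
    ring
  · right; right; left
    symm; apply key
    rw [hmain, h, hR, hqm1]
    push_cast [Nat.cast_sub (hpos (m+2))]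
    ring
  · right; left
    have e : 1 + (r+2) * ((r+2)^(2*m+2) - 1) / (r+2-1)
        = (1 * (r+2-1) + (r+2) * ((r+2)^(2*m+2) - 1)) / (r+2-1) := by
      rw [add_comm (_ * (r+2-1)), Nat.add_mul_div_right _ _ (by omega), add_comm]
    rw [e]; symm; apply key
    rw [hmain, h, hR]
    push_cast [Nat.cast_sub (hpos (2*m+2)), hqm1]
    ring
  · left
    symm; apply key
    rw [hmain, h, hR]
    push_cast [Nat.cast_sub (hpos (m+1))]
    ring
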